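/- Every function m : Stream' ℕ → Stream' ℕ → Stream' ℕ satisfying the corecursive equation m xs ys = SCons (head xs * head ys) ((m xs (tail ys)) ⊕ (m (tail xs) ys)) for all streams xs, ys, where ⊕ is pointwise addition, is commutative: m xs ys = m ys xs for all xs, ys. -/

import Mathlib

open Stream'

/-- Pointwise addition of streams. -/
def sadd (xs ys : Stream' ℕ) : Stream' ℕ := fun n => xs.get n + ys.get n

infixl:65 " ⊕ " => sadd

theorem stmt_8 (m : Stream' ℕ → Stream' ℕ → Stream' ℕ)
    (hm : ∀ xs ys, m xs ys =
      Stream'.cons (xs.head * ys.head) ((m xs ys.tail) ⊕ (m xs.tail ys))) :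
    ∀ xs ys, m xs ys = m ys xs := by
  have key : ∀ n : ℕ, ∀ xs ys, (m xs ys).get n = (m ys xs).get n := by
    intro n
    induction n with
    | zero =>
      intro xs ys
      rw [hm xs ys, hm ys xs]
      exact Nat.mul_comm _ _
    | succ k ih =>
      intro xs ys
      rw [hm xs ys, hm ys xs]
      change (m xs ys.tail).get k + (m xs.tail ys).get k
        = (m ys xs.tail).get k + (m ys.tail xs).get k
      rw [ih xs ys.tail, ih xs.tail ys, Nat.add_comm]
  intro xs ys
  exact Stream'.ext (fun n => key n xs ys)
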